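/- Let φ : ℝ → ℝ be bounded, nonnegative, equal to 0 on (1, ∞), and continuous outside a finite subset of ℝ, and define f : ℝ³ → ℝ by f(x) = φ(‖x‖) (so f is bounded, nonnegative, spherically symmetric, supported in the closed unit ball). Then there exists a sequence (f_n)_{n≥1} of functions ℝ³ → ℝ, each C^∞, nonnegative, spherically symmetric, and supported in the closed ball of radius 2 centered at the origin, such that f_n(x) ≥ f(x) for all x ∈ ℝ³ and all n, and ∫_{ℝ³} |f_n(x) − f(x)| dx → 0 as n → ∞. -/

import Mathlib

open MeasureTheory Metric Filter

/-- The Lipschitz upper envelope of a bounded function, together with its convergence. -/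
theorem exists_lipschitz_majorant (g : ℝ → ℝ) (M : ℝ) (hM : ∀ t, g t ≤ M) (h0 : ∀ t, 0 ≤ g t) :
    ∃ u : ℕ → ℝ → ℝ, (∀ n, UniformContinuous (u n)) ∧ (∀ n t, g t ≤ u n t) ∧
      (∀ n t, u n t ≤ M) ∧
      ∀ t, ContinuousAt g t → Tendsto (fun n => u n t) atTop (nhds (g t)) := by
  have hbdd : ∀ (n : ℕ) t, BddAbove (Set.range fun s => g s - n * |t - s|) := by
    intro n t
    refine ⟨M, ?_⟩
    rintro _ ⟨s, rfl⟩
    have : 0 ≤ (n : ℝ) * |t - s| := by positivity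
    have := hM s
    simp only
    linarith
  have hge : ∀ (n : ℕ) t, g t ≤ ⨆ s, (g s - n * |t - s|) := by
    intro n t
    have := le_ciSup (hbdd n t) t
    simpa using this
  refine ⟨fun n t => ⨆ s, (g s - n * |t - s|), ?_, hge, ?_, ?_⟩
  · intro n
    refine LipschitzWith.uniformContinuous (K := n) (LipschitzWith.of_le_add_mul _ ?_)
    intro x y
    refine ciSup_le fun s => ?_
    have h1 := le_ciSup (hbdd n y) s
    have h2 : |y - s| ≤ |x - s| + dist x y := by
      rw [Real.dist_eq, abs_sub_comm x y]
      have := abs_sub_le y x s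
      linarith
    have h3 : (n : ℝ) * |y - s| ≤ n * (|x - s| + dist x y) := by gcongr
    simp only [NNReal.coe_natCast] at *
    linarith
  · intro n t
    refine ciSup_le fun s => ?_
    have : 0 ≤ (n : ℝ) * |t - s| := by positivity
    have := hM s
    linarith
  · intro t ht
    rw [Metric.tendsto_atTop]
    intro ε hε
    obtain ⟨δ, hδ, hd⟩ := Metric.continuousAt_iff.1 ht (ε / 2) (by linarith)
    obtain ⟨N, hN⟩ := exists_nat_gt (M / δ)
    refine ⟨N, fun n hn => ?_⟩
    have hle : (⨆ s, (g s - n * |t - s|)) ≤ g t + ε / 2 := by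
      refine ciSup_le fun s => ?_
      by_cases hs : dist s t < δ
      · have := hd hs
        rw [Real.dist_eq] at this
        have := (abs_lt.1 this).2
        have : 0 ≤ (n : ℝ) * |t - s| := by positivity
        linarith
      · rw [Real.dist_eq, abs_sub_comm] at hs
        have h1 : M < N * δ := by rwa [div_lt_iff₀ hδ] at hN
        have h2 : (N : ℝ) * δ ≤ n * |t - s| := by
          have : (N : ℝ) ≤ n := by exact_mod_cast hn
          have := not_lt.1 hs
          gcongr
        have := hM s
        have := h0 t
        linarith
    have := hge n t
    rw [Real.dist_eq, abs_of_nonneg (by linarith)]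
    linarith

/-- A bounded, nonnegative, spherically symmetric function supported in the
unit ball, continuous outside a finite set of radii, can be approximated in `L¹` from above by
smooth, nonnegative, spherically symmetric functions supported in the ball of radius `2`. -/
theorem smooth_spherical_majorant_approx
    (φ : ℝ → ℝ) (M : ℝ) (hφ_bdd : ∀ r, φ r ≤ M) (hφ_nonneg : ∀ r, 0 ≤ φ r)
    (hφ_zero : ∀ r, 1 < r → φ r = 0)
    (S : Finset ℝ) (hφ_cont : ∀ r ∉ S, ContinuousAt φ r)
    (f : EuclideanSpace ℝ (Fin 3) → ℝ) (hf : ∀ x, f x = φ ‖x‖) :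
    ∃ F : ℕ → EuclideanSpace ℝ (Fin 3) → ℝ,
      (∀ n, 1 ≤ n → ContDiff ℝ (⊤ : ℕ∞) (F n)) ∧
      (∀ n, 1 ≤ n → ∀ x, 0 ≤ F n x) ∧
      (∀ n, 1 ≤ n → ∀ x y, ‖x‖ = ‖y‖ → F n x = F n y) ∧
      (∀ n, 1 ≤ n →
        Function.support (F n) ⊆ closedBall (0 : EuclideanSpace ℝ (Fin 3)) 2) ∧
      (∀ n, 1 ≤ n → ∀ x, f x ≤ F n x) ∧
      Tendsto (fun n => ∫ x, |F n x - f x|) atTop (nhds 0) := by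
  obtain ⟨u, hu_uc, hu_ge, hu_le, hu_lim⟩ := exists_lipschitz_majorant (fun t => φ (√t)) M
    (fun t => hφ_bdd _) (fun t => hφ_nonneg _)
  have hpos : ∀ n : ℕ, (0 : ℝ) < 1 / ((n : ℝ) + 1) := fun n => by positivity
  have hone : ∀ n : ℕ, 1 / ((n : ℝ) + 1) ≤ 1 := fun n => by
    rw [div_le_one (by positivity)]
    have : (0 : ℝ) ≤ n := by positivity
    linarith
  choose w hw_smooth hw using fun n => (hu_uc n).exists_contDiff_dist_le (hpos n)
  have hw1 : ∀ n t, u n t ≤ w n t + 1 / ((n : ℝ) + 1) := fun n t => by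
    have := hw n t
    rw [Real.dist_eq] at this
    have := abs_lt.1 this
    linarith
  have hw2 : ∀ n t, w n t ≤ u n t + 1 / ((n : ℝ) + 1) := fun n t => by
    have := hw n t
    rw [Real.dist_eq] at this
    have := abs_lt.1 this
    linarith
  have hsq : ∀ x : EuclideanSpace ℝ (Fin 3), √(‖x‖ ^ 2) = ‖x‖ := fun x =>
    Real.sqrt_sq (norm_nonneg x)
  set F : ℕ → EuclideanSpace ℝ (Fin 3) → ℝ := fun n x =>
    Real.smoothTransition (2 - ‖x‖ ^ 2) * (w n (‖x‖ ^ 2) + 1 / ((n : ℝ) + 1)) with hF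
  have hlow : ∀ n (x : EuclideanSpace ℝ (Fin 3)),
      f x ≤ w n (‖x‖ ^ 2) + 1 / ((n : ℝ) + 1) := fun n x => by
    have h1 := hu_ge n (‖x‖ ^ 2)
    simp only [hsq] at h1
    rw [hf]
    exact h1.trans (hw1 n _)
  have hf0 : ∀ x, 0 ≤ f x := fun x => by rw [hf]; exact hφ_nonneg _
  have hχ : ∀ x, Real.smoothTransition (2 - ‖x‖ ^ 2) * f x = f x := fun x => by
    by_cases hx : ‖x‖ ≤ 1
    · rw [Real.smoothTransition.one_of_one_le (by nlinarith [norm_nonneg x]), one_mul]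
    · rw [hf, hφ_zero _ (not_le.1 hx), mul_zero]
  have hFf : ∀ n x, f x ≤ F n x := fun n x => by
    rw [← hχ x]
    exact mul_le_mul_of_nonneg_left (hlow n x) (Real.smoothTransition.nonneg _)
  have hF0 : ∀ n x, 0 ≤ F n x := fun n x => (hf0 x).trans (hFf n x)
  have hF_smooth : ∀ n, ContDiff ℝ (⊤ : ℕ∞) (F n) := fun n => by
    have hn : ContDiff ℝ (⊤ : ℕ∞) (fun x : EuclideanSpace ℝ (Fin 3) => ‖x‖ ^ 2) :=
      contDiff_norm_sq ℝ
    exact (Real.smoothTransition.contDiff.comp (contDiff_const.sub hn)).mul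
      (((hw_smooth n).comp hn).add contDiff_const)
  have hF_out : ∀ n x, 2 < ‖x‖ → F n x = 0 := fun n x hx => by
    simp only [hF]
    rw [Real.smoothTransition.zero_of_nonpos (by nlinarith), zero_mul]
  have hF_le : ∀ n x, F n x ≤ M + 2 := fun n x => by
    have h1 := hw2 n (‖x‖ ^ 2)
    have h2 := hu_le n (‖x‖ ^ 2)
    have h3 := hone n
    have h4 := (hf0 x).trans (hlow n x)
    have h5 := mul_le_of_le_one_left h4 (Real.smoothTransition.le_one (2 - ‖x‖ ^ 2))
    exact h5.trans (by linarith)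
  have hae : ∀ᵐ x : EuclideanSpace ℝ (Fin 3), ‖x‖ ∉ S := by
    have : ∀ᵐ x : EuclideanSpace ℝ (Fin 3), ∀ r ∈ S, x ∉ sphere 0 r := by
      rw [Filter.eventually_all_finset]
      intro r _
      exact measure_eq_zero_iff_ae_notMem.1 (Measure.addHaar_sphere volume 0 r)
    filter_upwards [this] with x hx hS
    exact hx _ hS (by simp)
  have hlim : ∀ᵐ x, Tendsto (fun n => F n x) atTop (nhds (f x)) := by
    filter_upwards [hae] with x hx
    have hc : ContinuousAt (fun t => φ (√t)) (‖x‖ ^ 2) := by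
      refine ContinuousAt.comp (g := φ) ?_ Real.continuous_sqrt.continuousAt
      rw [hsq]
      exact hφ_cont _ hx
    have h1 := hu_lim _ hc
    simp only [hsq] at h1
    have h0 := tendsto_one_div_add_atTop_nhds_zero_nat (𝕜 := ℝ)
    have h2 : Tendsto (fun n => w n (‖x‖ ^ 2) + 1 / ((n : ℝ) + 1)) atTop (nhds (f x)) := by
      refine tendsto_of_tendsto_of_tendsto_of_le_of_le (h := fun n : ℕ =>
        u n (‖x‖ ^ 2) + 1 / ((n : ℝ) + 1) + 1 / ((n : ℝ) + 1)) tendsto_const_nhds ?_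
        (fun n => hlow n x) (fun n => by simpa using hw2 n _)
      rw [hf]
      simpa using (h1.add h0).add h0
    have h3 := h2.const_mul (Real.smoothTransition (2 - ‖x‖ ^ 2))
    rwa [hχ] at h3
  have hfm : AEStronglyMeasurable f volume :=
    aestronglyMeasurable_of_tendsto_ae atTop
      (fun n => (hF_smooth n).continuous.aestronglyMeasurable) hlim
  refine ⟨F, fun n _ => hF_smooth n, fun n _ => hF0 n, fun n _ x y hxy => ?_, fun n _ x hx => ?_,
    fun n _ => hFf n, ?_⟩
  · simp only [hF, hxy]
  · rw [mem_closedBall_zero_iff]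
    by_contra h
    exact hx (hF_out n x (not_le.1 h))
  · have key := tendsto_integral_of_dominated_convergence (μ := volume)
      (F := fun n x => |F n x - f x|) (f := fun _ => (0 : ℝ))
      ((closedBall (0 : EuclideanSpace ℝ (Fin 3)) 2).indicator fun _ => M + 2)
      (fun n => ((hF_smooth n).continuous.aestronglyMeasurable.sub hfm).norm)
      ((integrable_indicator_iff measurableSet_closedBall).2
        (integrableOn_const measure_closedBall_lt_top.ne))
      (fun n => Eventually.of_forall fun x => ?_) ?_
    · simpa using key
    · rw [Real.norm_eq_abs, abs_abs, abs_of_nonneg (by linarith [hFf n x])]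
      by_cases hx : ‖x‖ ≤ 2
      · rw [Set.indicator_of_mem (by simpa using hx)]
        linarith [hF_le n x, hf0 x]
      · rw [Set.indicator_of_notMem (by simpa using hx), hF_out n x (not_le.1 hx)]
        linarith [hf0 x]
    · filter_upwards [hlim] with x hx
      simpa using (hx.sub_const (f x)).abs
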